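/- Let K ∈ ps(C), let ω ⊆ Ω_{C°} be a nonempty Borel set, and let g : ω → ℝ be bounded and measurable. Then ∫_ω g(u) S_{n−1}^Θ(K, du) = ∫_{α_K^{-1}(ω)} g(α_K(v)) Θ(r_K(v)) ρ_K(v)^{n−1}/|⟨v, α_K(v)⟩| dv, where dv denotes integration with respect to spherical Lebesgue measure on S^{n−1}. -/

import Mathlib

open MeasureTheory Set Filter
open scoped RealInnerProductSpace ENNReal Topology Pointwise NNReal

noncomputable section

abbrev En (n : ℕ) := EuclideanSpace ℝ (Fin n)

/-- `C` is a pointed closed convex cone with nonempty interior. -/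
def IsGoodCone (n : ℕ) (C : Set (En n)) : Prop :=
  IsClosed C ∧ Convex ℝ C ∧ (∀ x ∈ C, ∀ r : ℝ, 0 ≤ r → r • x ∈ C) ∧
    C ∩ (-C) = {0} ∧ (interior C).Nonempty

/-- The dual cone `C° = {x : ⟨x,y⟩ ≤ 0 ∀ y ∈ C}`. -/
def dualCone (n : ℕ) (C : Set (En n)) : Set (En n) := {x | ∀ y ∈ C, ⟪x, y⟫ ≤ 0}

/-- `Ω_C = S^{n-1} ∩ int C`. -/
def omegaC (n : ℕ) (C : Set (En n)) : Set (En n) := Metric.sphere 0 1 ∩ interior C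

/-- `Ω_{C°} = S^{n-1} ∩ int C°`. -/
def omegaDual (n : ℕ) (C : Set (En n)) : Set (En n) :=
  Metric.sphere 0 1 ∩ interior (dualCone n C)

/-- A pseudo-cone: nonempty closed convex set not containing `0` with `λK ⊆ K` for `λ ≥ 1`. -/
def IsPseudoCone (n : ℕ) (K : Set (En n)) : Prop :=
  K.Nonempty ∧ IsClosed K ∧ Convex ℝ K ∧ (0 : En n) ∉ K ∧ ∀ l : ℝ, 1 ≤ l → l • K ⊆ K

/-- The recession cone of `K`. -/
def recCone (n : ℕ) (K : Set (En n)) : Set (En n) :=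
  {z | ∀ x ∈ K, ∀ t : ℝ, 0 ≤ t → x + t • z ∈ K}

/-- A `C`-pseudo-cone: a pseudo-cone with recession cone `C`. -/
def IsCPseudoCone (n : ℕ) (C K : Set (En n)) : Prop := IsPseudoCone n K ∧ recCone n K = C

/-- The set of outer unit normal vectors of `K` at `x`. -/
def normalsAt (n : ℕ) (K : Set (En n)) (x : En n) : Set (En n) :=
  {u | ‖u‖ = 1 ∧ ∀ y ∈ K, ⟪y, u⟫ ≤ ⟪x, u⟫}

/-- `ν_K^{-1}(ω)`: the boundary points of `K` whose outer unit normal is unique and lies in `ω`. -/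
def nuInv (n : ℕ) (K ω : Set (En n)) : Set (En n) :=
  {x | x ∈ frontier K ∧ ∃ u ∈ ω, normalsAt n K x = {u}}

open Classical in
/-- The outer unit normal map `ν_K` (junk value `0` where the normal is not unique). -/
def nuMap (n : ℕ) (K : Set (En n)) (x : En n) : En n :=
  if h : ∃ u, normalsAt n K x = {u} then h.choose else 0

/-- `Δ(ω)`: the spherical (angular) distance of `ω` from the boundary of `Ω_{C°}`
(the relative boundary of `Ω_{C°}` in the unit sphere is `closure Ω_{C°} \ Ω_{C°}`,
since `Ω_{C°}` is relatively open in the sphere). -/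
def sphereAngleDist (n : ℕ) (C ω : Set (En n)) : ℝ :=
  sInf {d | ∃ u ∈ ω, ∃ v ∈ closure (omegaDual n C) \ omegaDual n C,
    d = InnerProductGeometry.angle u v}

/-- `b(K)`: the distance of `K` from the origin. -/
def distOrigin (n : ℕ) (K : Set (En n)) : ℝ := Metric.infDist 0 K

/-- `C^-(t) = C ∩ H^-(𝔳, t)`. -/
def Cminus (n : ℕ) (C : Set (En n)) (v : En n) (t : ℝ) : Set (En n) :=
  C ∩ {x | ⟪x, v⟫ ≤ t}

/-- The support function `h_K(u) = sup{⟨y,u⟩ : y ∈ K}`. -/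
def suppFn (n : ℕ) (K : Set (En n)) (u : En n) : ℝ := sSup ((fun y => ⟪y, u⟫) '' K)

/-- `Θ : C∖{0} → (0,∞)` continuous and homogeneous of degree `-q`. -/
def IsThetaWeight (n : ℕ) (C : Set (En n)) (q : ℝ) (Θ : En n → ℝ) : Prop :=
  ContinuousOn Θ (C \ {0}) ∧ (∀ y ∈ C \ {0}, 0 < Θ y) ∧
    ∀ y ∈ C \ {0}, ∀ r : ℝ, 0 < r → Θ (r • y) = r ^ (-q) * Θ y

/-- The `Θ`-weighted `n`-dimensional Hausdorff (Lebesgue) measure `H_Θ^n`. -/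
def HTheta (n : ℕ) (Θ : En n → ℝ) : Measure (En n) :=
  volume.withDensity fun y => ENNReal.ofReal (Θ y)

/-- The `Θ`-weighted cone-volume measure `V_K^Θ(ω) = H_Θ^n(⋃_{x ∈ ν_K^{-1}(ω)} [0,x])`. -/
def coneVol (n : ℕ) (Θ : En n → ℝ) (K ω : Set (En n)) : ℝ≥0∞ :=
  HTheta n Θ (⋃ x ∈ nuInv n K ω, segment ℝ (0 : En n) x)

/-- The (unweighted) cone-volume measure `V_K(ω) = H^n(⋃_{x ∈ ν_K^{-1}(ω)} [0,x])`. -/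
def coneVolU (n : ℕ) (K ω : Set (En n)) : ℝ≥0∞ :=
  volume (⋃ x ∈ nuInv n K ω, segment ℝ (0 : En n) x)

/-- The `Θ`-weighted surface area measure `S_{n-1}^Θ(K,ω) = ∫_{ν_K^{-1}(ω)} Θ dH^{n-1}`. -/
def surfTheta (n : ℕ) (Θ : En n → ℝ) (K ω : Set (En n)) : ℝ≥0∞ :=
  ∫⁻ x in nuInv n K ω, ENNReal.ofReal (Θ x) ∂(μH[(n : ℝ) - 1])

/-- `K ∈ K(C,ϖ)`: `K` is a `C`-pseudo-cone that is `C`-determined by `ϖ`. -/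
def CDetermined (n : ℕ) (C ϖ K : Set (En n)) : Prop :=
  IsCPseudoCone n C K ∧ K = C ∩ ⋂ u ∈ ϖ, {x | ⟪x, u⟫ ≤ suppFn n K u}

/-- The Wulff shape `[g] = C ∩ ⋂_{u ∈ ϖ} {y : ⟨y,u⟩ ≤ -g(u)}`. -/
def wulff (n : ℕ) (C ϖ : Set (En n)) (g : En n → ℝ) : Set (En n) :=
  C ∩ ⋂ u ∈ ϖ, {y | ⟪y, u⟫ ≤ -g u}

/-- The `Θ`-weighted covolume `V_Θ(K) = ∫_{C∖K} Θ dH^n`. -/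
def covol (n : ℕ) (Θ : En n → ℝ) (C K : Set (En n)) : ℝ≥0∞ := HTheta n Θ (C \ K)

/-- The radial function `ρ_K(v) = min{λ : λv ∈ K}`. -/
def rho (n : ℕ) (K : Set (En n)) (v : En n) : ℝ := sInf {t : ℝ | t • v ∈ K}

/-- The radial map `r_K(v) = ρ_K(v) v`. -/
def radMap (n : ℕ) (K : Set (En n)) (v : En n) : En n := rho n K v • v

/-- `α_K^{-1}(ω)`: directions `v ∈ Ω_C` with `r_K(v) ∈ ∂'K` (boundary point in `int C` with
unique outer normal) whose unique outer normal lies in `ω`. -/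
def alphaInv (n : ℕ) (C K ω : Set (En n)) : Set (En n) :=
  {v ∈ omegaC n C | radMap n K v ∈ frontier K ∧ radMap n K v ∈ interior C ∧
    ∃ u ∈ ω, normalsAt n K (radMap n K v) = {u}}

/-- `μ` is the Borel measure on `Ω_{C°}` representing the `Θ`-weighted cone-volume
measure of `K` (extended by `0` outside `Ω_{C°}`). -/
def RepsConeVol (n : ℕ) (C : Set (En n)) (Θ : En n → ℝ) (K : Set (En n))
    (μ : Measure (En n)) : Prop :=
  μ (omegaDual n C)ᶜ = 0 ∧
    ∀ ω, MeasurableSet ω → ω ⊆ omegaDual n C → μ ω = coneVol n Θ K ω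

/-- `μ` is the Borel measure on `Ω_{C°}` representing the `Θ`-weighted surface area
measure of `K` (extended by `0` outside `Ω_{C°}`). -/
def RepsSurf (n : ℕ) (C : Set (En n)) (Θ : En n → ℝ) (K : Set (En n))
    (μ : Measure (En n)) : Prop :=
  μ (omegaDual n C)ᶜ = 0 ∧
    ∀ ω, MeasurableSet ω → ω ⊆ omegaDual n C → μ ω = surfTheta n Θ K ω

/-!
On the points `x` of `∂K` with a unique outer unit normal, `ν_K` is continuous, because the pairs
`(x, u)` with `u` an outer unit normal at `x` form a closed set. The two supporting inequalities at
`p` and `q` then give `⟨p - q, ν_K(x)⟩ = o(|p - q|)` as `p, q → x`, so this part of `∂K` is strictly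
tangent to the hyperplane `ν_K(x)^⊥`, even though it need not be a manifold. A map with a strict
derivative hence distorts `(n-1)`-dimensional Hausdorff measure near `x` by the determinant of that
derivative on `ν_K(x)^⊥`. For the radial projection `x ↦ x/|x|`, the derivative is `|x|⁻¹` times the
orthogonal projection onto `x^⊥`, with determinant `|x|^{-(n-1)} |⟨x/|x|, ν_K(x)⟩|`; since the
projection is inverse to `r_K`, changing variables gives the formula.
-/

lemma exists_lt_one_mul_self_eq {a : ℝ≥0} (ha : a < 1) : ∃ b < 1, b * b = a :=
  ⟨NNReal.sqrt a, by rwa [← NNReal.sqrt_one, NNReal.sqrt_lt_sqrt], NNReal.mul_self_sqrt a⟩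

section HasJacobianAt

lemma measure_le_of_iUnion_eq_univ {α : Type*} [MeasurableSpace α] {μ ν : Measure α}
    {U : ℕ → Set α} (hU : ∀ n, MeasurableSet (U n)) (hUuniv : ⋃ n, U n = univ)
    (hle : ∀ n, ∀ A ⊆ U n, MeasurableSet A → μ A ≤ ν A) : μ ≤ ν := by
  refine Measure.le_iff.2 fun A hA => ?_
  have hdecomp (κ : Measure α) : κ A = ∑' n, κ (A ∩ disjointed U n) := by
    rw [← measure_iUnion ((disjoint_disjointed U).mono fun i j hij =>
        hij.mono inter_subset_right inter_subset_right)
      fun n => hA.inter (MeasurableSet.disjointed hU n), ← inter_iUnion, iUnion_disjointed,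
      hUuniv, inter_univ]
  rw [hdecomp μ, hdecomp ν]
  exact ENNReal.tsum_le_tsum fun n => hle n _
    (inter_subset_right.trans (disjointed_subset U n)) (hA.inter (MeasurableSet.disjointed hU n))

lemma measure_le_of_eventually_smallSets {α : Type*} [TopologicalSpace α]
    [SecondCountableTopology α] [MeasurableSpace α] [OpensMeasurableSpace α] {μ ν : Measure α}
    (hle : ∀ x, ∀ᶠ A in (𝓝 x).smallSets, MeasurableSet A → μ A ≤ ν A) : μ ≤ ν := by
  choose V hV hVle using fun x => eventually_smallSets.1 (hle x)
  obtain ⟨t, htc, ht⟩ := TopologicalSpace.countable_cover_nhds fun x => interior_mem_nhds.2 (hV x)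
  obtain ⟨U, hU, hUuniv⟩ := (exists_seq_cover_iff_countable
    (p := fun W : Set α => IsOpen W ∧ ∀ A ⊆ W, MeasurableSet A → μ A ≤ ν A)
      ⟨∅, isOpen_empty, fun A hA _ => by simp [subset_empty_iff.1 hA]⟩).2
    ⟨(fun x => interior (V x)) '' t, htc.image _, by
      rintro _ ⟨x, -, rfl⟩
      exact ⟨isOpen_interior, fun A hA => hVle x A (hA.trans interior_subset)⟩,
      by rwa [sUnion_image]⟩
  exact measure_le_of_iUnion_eq_univ (fun n => (hU n).1.measurableSet) hUuniv fun n => (hU n).2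

/-- The map `f` distorts volume by the factor `J` at `x`: as the set `A` shrinks to `x`, the measure
`ν (f '' A)` is asymptotic to `J * μ A`. The two inequalities avoid dividing by `μ A`. -/
def HasJacobianAt {α β : Type*} [TopologicalSpace α] [MeasurableSpace α] [MeasurableSpace β]
    (μ : Measure α) (ν : Measure β) (f : α → β) (J : ℝ≥0) (x : α) : Prop :=
  ∀ a : ℝ≥0, a < 1 → ∀ᶠ A in (𝓝 x).smallSets,
    a * ν (f '' A) ≤ J * μ A ∧ a * (J * μ A) ≤ ν (f '' A)

variable {α β : Type*} [TopologicalSpace α] [MeasurableSpace α] [MeasurableSpace β]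
  {μ : Measure α} {ν : Measure β} {f : α → β}

lemma HasJacobianAt.eventually_withDensity {J : α → ℝ≥0} {x : α}
    (hf : HasJacobianAt μ ν f (J x) x) (hJ : ContinuousAt J x) (hJx : J x ≠ 0)
    {a : ℝ≥0} (ha : a < 1) :
    ∀ᶠ A in (𝓝 x).smallSets, MeasurableSet A →
      a * ν (f '' A) ≤ μ.withDensity (fun y => J y) A ∧
        a * μ.withDensity (fun y => J y) A ≤ ν (f '' A) := by
  obtain ⟨b, hb, rfl⟩ := exists_lt_one_mul_self_eq ha
  have hbJ : b * J x < J x := mul_lt_of_lt_one_left (pos_iff_ne_zero.2 hJx) hb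
  have hlower : ∀ᶠ y in 𝓝 x, b * J x < J y := hJ.eventually (lt_mem_nhds hbJ)
  have hupper : ∀ᶠ y in 𝓝 x, b * J y < J x :=
    (continuousAt_const.mul hJ).eventually (gt_mem_nhds hbJ)
  filter_upwards [hf b hb, (hlower.and hupper).smallSets] with A ⟨himage, hvolume⟩ hJA hA
  have hlower' : b * (J x * μ A) ≤ μ.withDensity (fun y => J y) A := by
    rw [withDensity_apply _ hA, ← mul_assoc, ← setLIntegral_const]
    exact setLIntegral_mono' hA fun y hy => mod_cast (hJA y hy).1.le
  have hupper' : b * μ.withDensity (fun y => J y) A ≤ J x * μ A := by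
    rw [withDensity_apply _ hA, ← lintegral_const_mul' _ _ ENNReal.coe_ne_top,
      ← setLIntegral_const]
    exact setLIntegral_mono' hA fun y hy => mod_cast (hJA y hy).2.le
  rw [ENNReal.coe_mul, mul_assoc, mul_assoc]
  exact ⟨(mul_le_mul_right himage _).trans hlower', (mul_le_mul_right hupper' _).trans hvolume⟩

variable [OpensMeasurableSpace α] [SecondCountableTopology α]

theorem comap_eq_withDensity_of_hasJacobianAt (hf : MeasurableEmbedding f) {J : α → ℝ≥0}
    (hJ : Continuous J) (hJ0 : ∀ x, J x ≠ 0) (hfJ : ∀ x, HasJacobianAt μ ν f (J x) x) :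
    ν.comap f = μ.withDensity fun x => J x := by
  have hsmall (x : α) {a : ℝ≥0} (ha : a < 1) :=
    (hfJ x).eventually_withDensity hJ.continuousAt (hJ0 x) ha
  have hle {a : ℝ≥0} (ha : a < 1) : a • ν.comap f ≤ μ.withDensity fun x => J x :=
    measure_le_of_eventually_smallSets fun x => (hsmall x ha).mono fun A h hA => by
      rw [Measure.coe_nnreal_smul_apply, hf.comap_apply]; exact (h hA).1
  have hge {a : ℝ≥0} (ha : a < 1) : a • μ.withDensity (fun x => (J x : ℝ≥0∞)) ≤ ν.comap f :=
    measure_le_of_eventually_smallSets fun x => (hsmall x ha).mono fun A h hA => by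
      rw [Measure.coe_nnreal_smul_apply, hf.comap_apply]; exact (h hA).2
  refine le_antisymm (Measure.le_intro fun A _ _ => ?_) (Measure.le_intro fun A _ _ => ?_)
  all_goals
    refine ENNReal.le_of_forall_lt_one_mul_le fun a ha => ?_
    lift a to ℝ≥0 using ha.ne_top
  · exact hle (mod_cast ha) A
  · exact hge (mod_cast ha) A

theorem setIntegral_range_of_hasJacobianAt {F : Type*} [NormedAddCommGroup F] [NormedSpace ℝ F]
    (hf : MeasurableEmbedding f) {J : α → ℝ≥0} (hJ : Continuous J) (hJ0 : ∀ x, J x ≠ 0)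
    (hfJ : ∀ x, HasJacobianAt μ ν f (J x) x) (G : β → F) :
    ∫ y in range f, G y ∂ν = ∫ x, J x • G (f x) ∂μ := by
  rw [← hf.map_comap, hf.integral_map, comap_eq_withDensity_of_hasJacobianAt hf hJ hJ0 hfJ,
    integral_withDensity_eq_integral_smul hJ.measurable]

end HasJacobianAt

section Hausdorff

open Asymptotics

lemma hausdorffMeasure_image_le_of_edist_le {X Y Z : Type*} [EMetricSpace Y] [MeasurableSpace Y]
    [BorelSpace Y] [EMetricSpace Z] [MeasurableSpace Z] [BorelSpace Z] {f : X → Y} {g : X → Z}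
    {A : Set X} {c : ℝ≥0} {d : ℝ} (hd : 0 ≤ d)
    (hfg : ∀ x ∈ A, ∀ y ∈ A, edist (f x) (f y) ≤ c * edist (g x) (g y)) :
    μH[d] (f '' A) ≤ c ^ d * μH[d] (g '' A) := by
  obtain rfl | ⟨x₀, -⟩ := A.eq_empty_or_nonempty
  · simp
  have : Nonempty X := ⟨x₀⟩
  let h : Z → Y := f ∘ Function.invFunOn g A
  have hhg : ∀ x ∈ A, h (g x) = f x := fun x hx => by
    have hgx : g x ∈ g '' A := mem_image_of_mem g hx
    have hle := hfg _ (Function.invFunOn_mem hgx) x hx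
    rwa [Function.invFunOn_eq hgx, edist_self, mul_zero, nonpos_iff_eq_zero, edist_eq_zero] at hle
  have hlip : LipschitzOnWith c h (g '' A) := by
    rintro _ ⟨x, hx, rfl⟩ _ ⟨y, hy, rfl⟩
    rw [hhg x hx, hhg y hy]
    exact hfg x hx y hy
  rw [← image_congr hhg, ← image_image h g]
  exact hlip.hausdorffMeasure_image_le hd

lemma exists_one_lt_mul_rpow_le_one {a : ℝ≥0} (ha : a < 1) (d : ℝ) :
    ∃ c : ℝ≥0, 1 < c ∧ a * c ^ d ≤ 1 := by
  have hcont : ContinuousAt (fun c : ℝ≥0 => a * c ^ d) 1 :=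
    continuousAt_const.mul (NNReal.continuousAt_rpow_const (.inl one_ne_zero))
  have hlt : ∀ᶠ c : ℝ≥0 in 𝓝[>] 1, a * c ^ d < 1 :=
    nhdsWithin_le_nhds (hcont.eventually (gt_mem_nhds (by simpa using ha)))
  obtain ⟨c, hc, hc1⟩ := (hlt.and self_mem_nhdsWithin).exists
  exact ⟨c, hc1, hc.le⟩

lemma eventually_mul_hausdorffMeasure_image_le {X Y Z : Type*} [TopologicalSpace X]
    [MetricSpace Y] [MeasurableSpace Y] [BorelSpace Y] [MetricSpace Z] [MeasurableSpace Z]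
    [BorelSpace Z] {f : X → Y} {g : X → Z} {x : X}
    (hfg : (fun p : X × X => dist (f p.1) (f p.2)) ~[𝓝 (x, x)] fun p => dist (g p.1) (g p.2))
    {d : ℝ} (hd : 0 ≤ d) {a : ℝ≥0} (ha : a < 1) :
    ∀ᶠ A in (𝓝 x).smallSets, a * μH[d] (f '' A) ≤ μH[d] (g '' A) := by
  obtain ⟨c, hc, hac⟩ := exists_one_lt_mul_rpow_le_one ha d
  have hdist : ∀ᶠ p : X × X in 𝓝 x ×ˢ 𝓝 x, dist (f p.1) (f p.2) ≤ c * dist (g p.1) (g p.2) := by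
    rw [← nhds_prod_eq]
    filter_upwards [hfg.def (c := c - 1) (by simpa using hc)] with p hp
    have := (Real.le_norm_self _).trans hp
    rw [Pi.sub_apply, Real.norm_of_nonneg dist_nonneg] at this
    linarith
  obtain ⟨U, hU, hUdist⟩ := eventually_prod_self_iff'.1 hdist
  refine eventually_smallSets.2 ⟨U, hU, fun A hA => ?_⟩
  have hle := hausdorffMeasure_image_le_of_edist_le (f := f) (g := g) (A := A) (c := c) hd
    fun y hy z hz => by
      simp only [edist_nndist, ← ENNReal.coe_mul, ENNReal.coe_le_coe]
      exact hUdist y (hA hy) z (hA hz)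
  calc (a : ℝ≥0∞) * μH[d] (f '' A) ≤ a * (c ^ d * μH[d] (g '' A)) := by gcongr
    _ = (a * c ^ d : ℝ≥0) * μH[d] (g '' A) := by
      rw [ENNReal.coe_mul, ENNReal.coe_rpow_of_ne_zero (zero_lt_one.trans hc).ne', mul_assoc]
    _ ≤ 1 * μH[d] (g '' A) := by gcongr; exact mod_cast hac
    _ = μH[d] (g '' A) := one_mul _

lemma hasJacobianAt_hausdorffMeasure_of_isEquivalent {X Y U V : Type*} [MetricSpace X]
    [MeasurableSpace X] [BorelSpace X] [MetricSpace Y] [MeasurableSpace Y] [BorelSpace Y]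
    [NormedAddCommGroup U] [InnerProductSpace ℝ U] [FiniteDimensional ℝ U] [MeasurableSpace U]
    [BorelSpace U] [NormedAddCommGroup V] [InnerProductSpace ℝ V] [MeasurableSpace V]
    [BorelSpace V] {f : X → Y} {φ : X → U} {T : U →ₗ[ℝ] V} {x : X}
    (hφ : (fun p : X × X => dist p.1 p.2) ~[𝓝 (x, x)] fun p => dist (φ p.1) (φ p.2))
    (hf : (fun p : X × X => dist (f p.1) (f p.2)) ~[𝓝 (x, x)]
      fun p => dist (T (φ p.1)) (T (φ p.2))) :
    HasJacobianAt μH[Module.finrank ℝ U] μH[Module.finrank ℝ U] f T.normDet.toNNReal x := by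
  intro a ha
  obtain ⟨b, hb, rfl⟩ := exists_lt_one_mul_self_eq ha
  have hd : (0 : ℝ) ≤ Module.finrank ℝ U := Nat.cast_nonneg _
  have himage (A : Set X) : μH[Module.finrank ℝ U] ((T ∘ φ) '' A) =
      T.normDet.toNNReal * μH[Module.finrank ℝ U] (φ '' A) := by
    rw [image_comp, T.hausdorffMeasure_image, ENNReal.ofReal]
  filter_upwards [eventually_mul_hausdorffMeasure_image_le (f := id) hφ hd hb,
    eventually_mul_hausdorffMeasure_image_le (g := id) hφ.symm hd hb,
    eventually_mul_hausdorffMeasure_image_le (g := T ∘ φ) hf hd hb,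
    eventually_mul_hausdorffMeasure_image_le (f := T ∘ φ) hf.symm hd hb] with A hφ₁ hφ₂ hf₁ hf₂
  rw [himage] at hf₁ hf₂
  rw [image_id] at hφ₁ hφ₂
  push_cast
  constructor
  · calc b * b * μH[Module.finrank ℝ U] (f '' A)
        ≤ b * (T.normDet.toNNReal * μH[Module.finrank ℝ U] (φ '' A)) := by
          rw [mul_assoc]; gcongr
      _ = T.normDet.toNNReal * (b * μH[Module.finrank ℝ U] (φ '' A)) := mul_left_comm _ _ _
      _ ≤ T.normDet.toNNReal * μH[Module.finrank ℝ U] A := by gcongr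
  · calc b * b * (T.normDet.toNNReal * μH[Module.finrank ℝ U] A)
        = b * (T.normDet.toNNReal * (b * μH[Module.finrank ℝ U] A)) := by ring
      _ ≤ b * (T.normDet.toNNReal * μH[Module.finrank ℝ U] (φ '' A)) := by gcongr
      _ ≤ μH[Module.finrank ℝ U] (f '' A) := hf₂

end Hausdorff

section StrictTangentSpace

open Asymptotics Module

lemma isEquivalent_norm {α E : Type*} [NormedAddCommGroup E] {u v : α → E} {l : Filter α}
    (huv : u ~[l] v) : (fun x => ‖u x‖) ~[l] fun x => ‖v x‖ :=
  have hle := IsBigO.of_bound' (l := l) (.of_forall fun x => abs_norm_sub_norm_le (u x) (v x))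
  (hle.trans_isLittleO huv.isLittleO).norm_right

variable {E F : Type*} [NormedAddCommGroup E] [InnerProductSpace ℝ E]
  [NormedAddCommGroup F] [InnerProductSpace ℝ F] {S : Set E} {x : S}

/-- The subspace `W` is the strict tangent space of the set `S` at `x`: secants of `S` with both
endpoints tending to `x` are asymptotic to their orthogonal projections onto `W`. -/
def HasStrictTangentSpaceAt (S : Set E) (W : Submodule ℝ E) [W.HasOrthogonalProjection]
    (x : S) : Prop :=
  (fun p : S × S => (p.1 - p.2 : E)) ~[𝓝 (x, x)] fun p => W.starProjection (p.1 - p.2)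

lemma hasStrictTangentSpaceAt_orthogonal_span_singleton {u : E} (hu : ‖u‖ = 1)
    (hS : (fun p : S × S => ⟪(p.1 - p.2 : E), u⟫) =o[𝓝 (x, x)] fun p => (p.1 - p.2 : E)) :
    HasStrictTangentSpaceAt S (ℝ ∙ u)ᗮ x := by
  refine IsEquivalent.symm (IsLittleO.isEquivalent ?_)
  have hproj (z : E) : (ℝ ∙ u)ᗮ.starProjection z - z = -⟪z, u⟫ • u := by
    rw [Submodule.starProjection_orthogonal_val, Submodule.starProjection_unit_singleton ℝ hu,
      real_inner_comm]
    module
  refine IsLittleO.congr_left ?_ fun p => (hproj (p.1 - p.2)).symm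
  exact (hS.neg_left.norm_left.congr_left fun p => by rw [norm_smul, hu, mul_one]).of_norm_left

lemma HasStrictTangentSpaceAt.isEquivalent_sub {W : Submodule ℝ E} [FiniteDimensional ℝ W]
    (hS : HasStrictTangentSpaceAt S W x) {f : E → F} {f' : E →L[ℝ] F}
    (hf : HasStrictFDerivAt f f' x) (hf' : (f'.toLinearMap.domRestrict W).ker = ⊥) :
    (fun p : S × S => f p.1 - f p.2) ~[𝓝 (x, x)] fun p => f' (W.starProjection (p.1 - p.2)) := by
  have hcoe : Tendsto (fun p : S × S => ((p.1, p.2) : E × E)) (𝓝 (x, x)) (𝓝 (x, x)) :=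
    (continuous_subtype_val.prodMap continuous_subtype_val).tendsto (x, x)
  have hanti : (fun p : S × S => W.starProjection (p.1 - p.2 : E)) =O[𝓝 (x, x)]
      fun p => f' (W.starProjection (p.1 - p.2)) := by
    obtain ⟨c, -, hc⟩ := (f'.toLinearMap.domRestrict W).exists_antilipschitzWith hf'
    refine IsBigO.of_bound c (Eventually.of_forall fun p => ?_)
    have hle := hc.le_mul_dist (W.orthogonalProjectionOnto (p.1 - p.2)) 0
    rwa [map_zero, dist_zero_right, dist_zero_right] at hle
  have hderiv : (fun p : S × S => f p.1 - f p.2 - f' (p.1 - p.2)) =o[𝓝 (x, x)]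
      fun p => W.starProjection (p.1 - p.2 : E) :=
    (hf.isLittleO.comp_tendsto hcoe).trans_isBigO hS.isBigO
  have hproj := (f'.isBigO_comp (fun p : S × S => _) (𝓝 (x, x))).trans_isLittleO hS.isLittleO
  exact ((hderiv.add hproj).trans_isBigO hanti).congr_left fun p => by
    simp only [Pi.sub_apply, map_sub]; abel

theorem HasStrictTangentSpaceAt.hasJacobianAt [MeasurableSpace E] [BorelSpace E]
    [MeasurableSpace F] [BorelSpace F] {W : Submodule ℝ E} [FiniteDimensional ℝ W]
    (hS : HasStrictTangentSpaceAt S W x) {f : E → F} {f' : E →L[ℝ] F}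
    (hf : HasStrictFDerivAt f f' x) (hf' : (f'.toLinearMap.domRestrict W).ker = ⊥) :
    HasJacobianAt (μH[finrank ℝ W] : Measure S) μH[finrank ℝ W] (fun y : S => f y)
      (f'.toLinearMap.domRestrict W).normDet.toNNReal x := by
  have hproj : (fun p : S × S => dist p.1 p.2) ~[𝓝 (x, x)] fun p =>
      dist (W.orthogonalProjectionOnto (p.1 : E)) (W.orthogonalProjectionOnto (p.2 : E)) := by
    simp only [Subtype.dist_eq, dist_eq_norm, ← map_sub]
    exact isEquivalent_norm hS
  have himage : (fun p : S × S => dist (f p.1) (f p.2)) ~[𝓝 (x, x)] fun p =>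
      dist (f'.toLinearMap.domRestrict W (W.orthogonalProjectionOnto (p.1 : E)))
        (f'.toLinearMap.domRestrict W (W.orthogonalProjectionOnto (p.2 : E))) := by
    simp only [dist_eq_norm, ← map_sub]
    exact isEquivalent_norm (hS.isEquivalent_sub hf hf')
  exact hasJacobianAt_hausdorffMeasure_of_isEquivalent (f := fun y : S => f y)
    (φ := fun y : S => W.orthogonalProjectionOnto (y : E)) hproj himage

end StrictTangentSpace

section RadialProjection

open Module NormedSpace

variable {E : Type*} [NormedAddCommGroup E] [InnerProductSpace ℝ E]

lemma hasStrictFDerivAt_normalize {x : E} (hx : x ≠ 0) :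
    HasStrictFDerivAt (normalize : E → E) (‖x‖⁻¹ • (ℝ ∙ normalize x)ᗮ.starProjection) x := by
  have hx0 : ‖x‖ ≠ 0 := norm_ne_zero_iff.2 hx
  have hnorm := (hasStrictFDerivAt_norm_sq x).sqrt (by positivity)
  simp only [Real.sqrt_sq (norm_nonneg _)] at hnorm
  have hsmul := ((hasStrictDerivAt_inv hx0).comp_hasStrictFDerivAt x hnorm).smul
    (hasStrictFDerivAt_id x)
  refine hsmul.congr_fderiv (ContinuousLinearMap.ext fun z => ?_)
  have hproj : (ℝ ∙ normalize x)ᗮ.starProjection z = z - (‖x‖⁻¹ ^ 2 * ⟪x, z⟫) • x := by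
    rw [Submodule.starProjection_orthogonal_val,
      Submodule.starProjection_unit_singleton ℝ (norm_normalize hx), NormedSpace.normalize,
      real_inner_smul_left]
    module
  simp only [add_apply, smul_apply, ContinuousLinearMap.smulRight_apply,
    ContinuousLinearMap.id_apply, innerSL_apply_apply, Function.comp_apply, id, smul_eq_mul,
    nsmul_eq_mul, hproj]
  match_scalars <;> field_simp

lemma inner_starProjection_orthogonal_span_singleton {v : E} (hv : ‖v‖ = 1) (y z : E) :
    ⟪(ℝ ∙ v)ᗮ.starProjection y, (ℝ ∙ v)ᗮ.starProjection z⟫ = ⟪y, z⟫ - ⟪v, y⟫ * ⟪v, z⟫ := by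
  rw [Submodule.starProjection_orthogonal_val, Submodule.starProjection_orthogonal_val,
    Submodule.starProjection_unit_singleton ℝ hv, Submodule.starProjection_unit_singleton ℝ hv]
  simp only [inner_sub_left, inner_sub_right, inner_smul_left, inner_smul_right,
    real_inner_self_eq_norm_sq, hv, real_inner_comm v, conj_trivial]
  ring

lemma continuous_normalize {X : Type*} [TopologicalSpace X] {f : X → E} (hf : Continuous f)
    (hf0 : ∀ x, f x ≠ 0) : Continuous fun x => normalize (f x) :=
  (hf.norm.inv₀ fun x => norm_ne_zero_iff.2 (hf0 x)).smul hf

/-- The Jacobian at `x` of the radial projection onto the unit sphere, restricted to a hypersurface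
through `x` with unit normal `u`. -/
def radialJacobian (u x : E) : ℝ≥0 :=
  ‖x‖₊⁻¹ ^ (finrank ℝ E - 1) * ‖⟪normalize x, u⟫‖₊

lemma coe_radialJacobian_inv (u x : E) :
    (radialJacobian u x : ℝ)⁻¹ = ‖x‖ ^ (finrank ℝ E - 1) / |⟪normalize x, u⟫| := by
  simp [radialJacobian, mul_comm, div_eq_mul_inv]

lemma continuous_radialJacobian {X : Type*} [TopologicalSpace X] {u f : X → E}
    (hu : Continuous u) (hf : Continuous f) (hf0 : ∀ x, f x ≠ 0) :
    Continuous fun x => radialJacobian (u x) (f x) :=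
  ((hf.nnnorm.inv₀ fun x => nnnorm_ne_zero_iff.2 (hf0 x)).pow _).mul
    ((continuous_normalize hf hf0).inner hu).nnnorm

lemma radialJacobian_ne_zero {u x : E} (hxu : ⟪x, u⟫ ≠ 0) : radialJacobian u x ≠ 0 := by
  have hx : x ≠ 0 := by rintro rfl; exact hxu (inner_zero_left u)
  have hinner : ⟪normalize x, u⟫ ≠ 0 := by
    rw [NormedSpace.normalize, real_inner_smul_left]
    exact mul_ne_zero (inv_ne_zero (norm_ne_zero_iff.2 hx)) hxu
  exact mul_ne_zero (pow_ne_zero _ (inv_ne_zero (nnnorm_ne_zero_iff.2 hx)))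
    (nnnorm_ne_zero_iff.2 hinner)

variable [FiniteDimensional ℝ E]

lemma normDet_domRestrict_starProjection {u v : E} (hu : ‖u‖ = 1) (hv : ‖v‖ = 1) :
    ((ℝ ∙ v)ᗮ.starProjection.toLinearMap.domRestrict (ℝ ∙ u)ᗮ).normDet = |⟪v, u⟫| := by
  set T := (ℝ ∙ v)ᗮ.starProjection.toLinearMap.domRestrict (ℝ ∙ u)ᗮ
  set w := (ℝ ∙ u)ᗮ.orthogonalProjectionOnto v
  have hw (y : (ℝ ∙ u)ᗮ) : ⟪w, y⟫ = ⟪v, (y : E)⟫ :=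
    Submodule.inner_orthogonalProjectionOnto_eq_of_mem_right y v
  have hT : T.adjoint ∘ₗ T = LinearMap.transvection (innerₛₗ ℝ w) (-w) := by
    ext1 y
    refine ext_inner_right ℝ fun z => ?_
    have := inner_starProjection_orthogonal_span_singleton hv (y : E) z
    rw [LinearMap.comp_apply, LinearMap.adjoint_inner_left, LinearMap.transvection.apply,
      inner_add_left, inner_smul_left, inner_neg_left, innerₛₗ_apply_apply, hw, hw]
    simpa [T, sub_eq_add_neg] using this
  have hww : ⟪w, w⟫ = 1 - ⟪v, u⟫ ^ 2 := by
    have h := inner_starProjection_orthogonal_span_singleton hu v v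
    rw [real_inner_self_eq_norm_sq v, hv, one_pow, real_inner_comm v u, ← sq] at h
    exact h
  have hsq : T.normDet ^ 2 = ⟪v, u⟫ ^ 2 := by
    have := T.normDet_sq
    rw [hT, LinearMap.transvection.det, map_neg, innerₛₗ_apply_apply, hww] at this
    simpa using this
  rw [← abs_of_nonneg T.normDet_nonneg]
  exact (sq_eq_sq_iff_abs_eq_abs _ _).1 hsq

lemma finrank_orthogonal_span_singleton_add_one {u : E} (hu : u ≠ 0) :
    finrank ℝ (ℝ ∙ u)ᗮ + 1 = finrank ℝ E := by
  rw [← Submodule.finrank_add_finrank_orthogonal (ℝ ∙ u), finrank_span_singleton hu, add_comm]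

lemma normDet_domRestrict_fderiv_normalize {u x : E} (hu : ‖u‖ = 1) (hx : x ≠ 0) :
    ((‖x‖⁻¹ • (ℝ ∙ normalize x)ᗮ.starProjection).toLinearMap.domRestrict (ℝ ∙ u)ᗮ).normDet =
      radialJacobian u x := by
  have hu0 : u ≠ 0 := norm_ne_zero_iff.1 (hu ▸ one_ne_zero)
  change (‖x‖⁻¹ • (ℝ ∙ normalize x)ᗮ.starProjection.toLinearMap.domRestrict (ℝ ∙ u)ᗮ).normDet = _
  rw [LinearMap.normDet_smul, normDet_domRestrict_starProjection hu (norm_normalize hx),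
    radialJacobian, ← finrank_orthogonal_span_singleton_add_one hu0, Nat.add_sub_cancel]
  simp

lemma HasStrictTangentSpaceAt.hasJacobianAt_normalize [MeasurableSpace E] [BorelSpace E]
    {S : Set E} {x : S} {u : E} (hS : HasStrictTangentSpaceAt S (ℝ ∙ u)ᗮ x) (hu : ‖u‖ = 1)
    (hxu : ⟪(x : E), u⟫ ≠ 0) :
    HasJacobianAt (μH[(finrank ℝ E : ℝ) - 1] : Measure S) μH[(finrank ℝ E : ℝ) - 1]
      (fun y : S => normalize (y : E)) (radialJacobian u x) x := by
  have hx : (x : E) ≠ 0 := fun hx => hxu (by rw [hx, inner_zero_left])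
  have hu0 : u ≠ 0 := norm_ne_zero_iff.1 (hu ▸ one_ne_zero)
  have hdet := normDet_domRestrict_fderiv_normalize hu hx
  have hker := not_ne_iff.1 (LinearMap.normDet_eq_zero_iff_ker_ne_bot.not.1
    (hdet.trans_ne (NNReal.coe_ne_zero.2 (radialJacobian_ne_zero hxu))))
  have hjac := hS.hasJacobianAt (hasStrictFDerivAt_normalize hx) hker
  have hdim : (finrank ℝ (ℝ ∙ u)ᗮ : ℝ) = finrank ℝ E - 1 :=
    eq_sub_of_add_eq (mod_cast finrank_orthogonal_span_singleton_add_one hu0)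
  rwa [hdet, Real.toNNReal_coe, hdim] at hjac

lemma setIntegral_hausdorffMeasure_eq_integral_subtype {X F : Type*} [EMetricSpace X]
    [MeasurableSpace X] [BorelSpace X] [NormedAddCommGroup F] [NormedSpace ℝ F] {S : Set X}
    (hS : MeasurableSet S) {d : ℝ} (hd : 0 ≤ d) (G : X → F) :
    ∫ x in S, G x ∂μH[d] = ∫ x : S, G x ∂μH[d] := by
  rw [← (MeasurableEmbedding.subtype_coe hS).integral_map,
    isometry_subtype_coe.map_hausdorffMeasure (Or.inl hd), Subtype.range_coe]

theorem setIntegral_image_normalize [MeasurableSpace E] [BorelSpace E] {F : Type*}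
    [NormedAddCommGroup F] [NormedSpace ℝ F] {S : Set E} (hS : MeasurableSet S)
    (hinj : InjOn (normalize : E → E) S) {u : E → E} (hu : ContinuousOn u S)
    (hu1 : ∀ x ∈ S, ‖u x‖ = 1) (hxu : ∀ x ∈ S, ⟪x, u x⟫ ≠ 0)
    (htan : ∀ x : S, HasStrictTangentSpaceAt S (ℝ ∙ u x)ᗮ x) (G : E → F) :
    ∫ v in NormedSpace.normalize '' S, G v ∂μH[(finrank ℝ E : ℝ) - 1] =
      ∫ x in S, radialJacobian (u x) x • G (normalize x) ∂μH[(finrank ℝ E : ℝ) - 1] := by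
  rcases S.eq_empty_or_nonempty with rfl | ⟨x₀, hx₀⟩
  · simp
  have hS0 (x : S) : (x : E) ≠ 0 := fun hx => hxu x x.2 (by rw [hx, inner_zero_left])
  have hdim : (0 : ℝ) ≤ finrank ℝ E - 1 :=
    sub_nonneg.2 (mod_cast Module.finrank_pos_iff_exists_ne_zero.2 ⟨x₀, hS0 ⟨x₀, hx₀⟩⟩)
  have := FiniteDimensional.proper_real E
  have := hS.standardBorel
  have hemb : MeasurableEmbedding fun x : S => normalize (x : E) :=
    (continuous_normalize continuous_subtype_val hS0).measurable.measurableEmbedding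
      (injOn_iff_injective.1 hinj)
  rw [image_eq_range, setIntegral_hausdorffMeasure_eq_integral_subtype hS hdim]
  exact setIntegral_range_of_hasJacobianAt hemb
    (continuous_radialJacobian hu.domRestrict continuous_subtype_val hS0)
    (fun x => radialJacobian_ne_zero (hxu x x.2))
    (fun x => (htan x).hasJacobianAt_normalize (hu1 x x.2) (hxu x x.2)) G

end RadialProjection

section OuterNormal

variable {n : ℕ} {K : Set (En n)} {x u : En n}

/-- The points at which `K` has a unique outer unit normal. -/
def regularPoints (n : ℕ) (K : Set (En n)) : Set (En n) := {x | ∃ u, normalsAt n K x = {u}}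

lemma normalsAt_subset_of_subset {L : Set (En n)} (hKL : K ⊆ L) :
    normalsAt n L x ⊆ normalsAt n K x :=
  fun _ hu => ⟨hu.1, fun y hy => hu.2 y (hKL hy)⟩

lemma nuMap_eq (h : normalsAt n K x = {u}) : nuMap n K x = u := by
  have hex : ∃ u, normalsAt n K x = {u} := ⟨u, h⟩
  rw [nuMap, dif_pos hex]
  exact singleton_injective (hex.choose_spec.symm.trans h)

lemma normalsAt_eq_singleton_nuMap (hx : x ∈ regularPoints n K) :
    normalsAt n K x = {nuMap n K x} := by
  obtain ⟨u, hu⟩ := hx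
  rw [nuMap_eq hu, hu]

lemma nuMap_mem_normalsAt (hx : x ∈ regularPoints n K) : nuMap n K x ∈ normalsAt n K x :=
  normalsAt_eq_singleton_nuMap hx ▸ mem_singleton _

lemma mem_nuInv_iff {ω : Set (En n)} :
    x ∈ nuInv n K ω ↔ x ∈ frontier K ∧ x ∈ regularPoints n K ∧ nuMap n K x ∈ ω := by
  constructor
  · rintro ⟨hx, u, hu, h⟩
    exact ⟨hx, ⟨u, h⟩, (nuMap_eq h).symm ▸ hu⟩
  · rintro ⟨hx, hreg, hω⟩
    exact ⟨hx, _, hω, normalsAt_eq_singleton_nuMap hreg⟩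

lemma isClosed_setOf_mem_normalsAt : IsClosed {p : En n × En n | p.2 ∈ normalsAt n K p.1} := by
  have hnorm : IsClosed {p : En n × En n | ‖p.2‖ = 1} := isClosed_eq (by fun_prop) (by fun_prop)
  have hsupp : IsClosed (⋂ y ∈ K, {p : En n × En n | ⟪y, p.2⟫ ≤ ⟪p.1, p.2⟫}) :=
    isClosed_biInter fun y _ => isClosed_le (by fun_prop) (by fun_prop)
  convert hnorm.inter hsupp using 1
  ext p
  simp [normalsAt]

lemma isClosed_setOf_exists_mem_normalsAt {T : Set (En n × En n)} (hT : IsClosed T) :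
    IsClosed {x | ∃ u ∈ normalsAt n K x, ∃ w ∈ normalsAt n K x, (u, w) ∈ T} := by
  let Sph := Metric.sphere (0 : En n) 1
  let A : Set (En n × Sph × Sph) := {p | (p.2.1 : En n) ∈ normalsAt n K p.1 ∧
    (p.2.2 : En n) ∈ normalsAt n K p.1 ∧ ((p.2.1 : En n), (p.2.2 : En n)) ∈ T}
  have hA : IsClosed A :=
    (isClosed_setOf_mem_normalsAt.preimage (f := fun p : En n × Sph × Sph => (p.1, (p.2.1 : En n)))
      (by fun_prop)).inter <|
    (isClosed_setOf_mem_normalsAt.preimage (f := fun p : En n × Sph × Sph => (p.1, (p.2.2 : En n)))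
      (by fun_prop)).inter (hT.preimage (by fun_prop))
  convert isClosedMap_fst_of_compactSpace A hA using 1
  ext x
  constructor
  · rintro ⟨u, hu, w, hw, huw⟩
    exact ⟨⟨x, ⟨u, mem_sphere_zero_iff_norm.2 hu.1⟩, ⟨w, mem_sphere_zero_iff_norm.2 hw.1⟩⟩,
      ⟨hu, hw, huw⟩, rfl⟩
  · rintro ⟨⟨x, u, w⟩, ⟨hu, hw, huw⟩, rfl⟩
    exact ⟨u, hu, w, hw, huw⟩

lemma regularPoints_eq_diff_iUnion : regularPoints n K =
    {x | ∃ u ∈ normalsAt n K x, ∃ w ∈ normalsAt n K x, (u, w) ∈ univ} \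
      ⋃ k : ℕ, {x | ∃ u ∈ normalsAt n K x, ∃ w ∈ normalsAt n K x,
        (u, w) ∈ {p : En n × En n | 1 / ((k : ℝ) + 1) ≤ dist p.1 p.2}} := by
  ext x
  constructor
  · intro hx
    refine ⟨⟨_, nuMap_mem_normalsAt hx, _, nuMap_mem_normalsAt hx, mem_univ _⟩, fun hx' => ?_⟩
    obtain ⟨k, u, hu, w, hw, hk : _ ≤ dist u w⟩ := mem_iUnion.1 hx'
    rw [normalsAt_eq_singleton_nuMap hx, mem_singleton_iff] at hu hw
    rw [hu, hw, dist_self] at hk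
    exact (one_div_pos.2 k.cast_add_one_pos).not_ge hk
  · rintro ⟨⟨u, hu, -⟩, hx⟩
    refine ⟨u, eq_singleton_iff_unique_mem.2 ⟨hu, fun w hw => by_contra fun hne => hx ?_⟩⟩
    obtain ⟨k, hk⟩ := exists_nat_one_div_lt (dist_pos.2 hne)
    exact mem_iUnion.2 ⟨k, w, hw, u, hu, hk.le⟩

lemma measurableSet_regularPoints : MeasurableSet (regularPoints n K) := by
  rw [regularPoints_eq_diff_iUnion]
  exact (isClosed_setOf_exists_mem_normalsAt isClosed_univ).measurableSet.diff <|
    MeasurableSet.iUnion fun k => (isClosed_setOf_exists_mem_normalsAt <|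
      isClosed_le continuous_const continuous_dist).measurableSet

lemma continuousOn_nuMap : ContinuousOn (nuMap n K) (regularPoints n K) := by
  intro x hx
  rw [ContinuousWithinAt, Metric.tendsto_nhds]
  intro ε hε
  let far : Set (En n) := {y | ∃ u ∈ normalsAt n K y, ∃ w ∈ normalsAt n K y,
    (u, w) ∈ {p : En n × En n | ε ≤ dist p.1 (nuMap n K x)}}
  have hfar : IsClosed far :=
    isClosed_setOf_exists_mem_normalsAt (isClosed_le continuous_const (by fun_prop))
  have hxfar : x ∉ far := by
    rintro ⟨u, hu, _, _, hdist : ε ≤ dist u _⟩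
    rw [normalsAt_eq_singleton_nuMap hx, mem_singleton_iff] at hu
    rw [hu, dist_self] at hdist
    exact hε.not_ge hdist
  filter_upwards [mem_nhdsWithin_of_mem_nhds (hfar.isOpen_compl.mem_nhds hxfar),
    self_mem_nhdsWithin] with y hyfar hy
  by_contra! hdist
  exact hyfar ⟨_, nuMap_mem_normalsAt hy, _, nuMap_mem_normalsAt hy, hdist⟩

lemma measurable_nuMap : Measurable (nuMap n K) := by
  classical
  have h : nuMap n K = (regularPoints n K).piecewise (nuMap n K) 0 := by
    ext1 x
    by_cases hx : x ∈ regularPoints n K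
    · rw [piecewise_eq_of_mem _ _ _ hx]
    · rw [piecewise_eq_of_notMem _ _ _ hx]
      exact dif_neg hx
  rw [h]
  exact continuousOn_nuMap.measurable_piecewise continuousOn_const measurableSet_regularPoints

lemma measurableSet_nuInv {ω : Set (En n)} (hω : MeasurableSet ω) :
    MeasurableSet (nuInv n K ω) := by
  have h : nuInv n K ω = frontier K ∩ (regularPoints n K ∩ nuMap n K ⁻¹' ω) :=
    Set.ext fun _ => mem_nuInv_iff
  rw [h]
  exact isClosed_frontier.measurableSet.inter
    (measurableSet_regularPoints.inter (measurable_nuMap hω))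

open Asymptotics in
lemma isLittleO_inner_sub_of_continuousAt {E : Type*} [NormedAddCommGroup E]
    [InnerProductSpace ℝ E] {S : Set E} {u : S → E} {x : S} (hu : ContinuousAt u x)
    (hS : ∀ p q : S, ⟪(p : E), u q⟫ ≤ ⟪(q : E), u q⟫) :
    (fun p : S × S => ⟪(p.1 - p.2 : E), u x⟫) =o[𝓝 (x, x)] fun p => (p.1 - p.2 : E) := by
  refine IsLittleO.of_bound fun c hc => ?_
  have hnear : ∀ᶠ p in 𝓝 x, ‖u x - u p‖ ≤ c := by
    filter_upwards [Metric.tendsto_nhds.1 hu c hc] with p hp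
    rw [← dist_eq_norm, dist_comm]
    exact hp.le
  rw [nhds_prod_eq]
  filter_upwards [hnear.prod_mk hnear] with ⟨p, q⟩ ⟨hp, hq⟩
  have key (a b : S) (hb : ‖u x - u b‖ ≤ c) : ⟪(a - b : E), u x⟫ ≤ c * ‖(a - b : E)‖ :=
    calc ⟪(a - b : E), u x⟫ = (⟪(a : E), u b⟫ - ⟪(b : E), u b⟫) + ⟪(a - b : E), u x - u b⟫ := by
          rw [inner_sub_right, inner_sub_left _ _ (u b)]; ring
      _ ≤ 0 + ‖(a - b : E)‖ * ‖u x - u b‖ :=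
          add_le_add (sub_nonpos.2 (hS a b)) (real_inner_le_norm _ _)
      _ ≤ c * ‖(a - b : E)‖ := by rw [zero_add, mul_comm]; gcongr
  rw [Real.norm_eq_abs, abs_le']
  refine ⟨key p q hq, ?_⟩
  rw [← inner_neg_left, neg_sub, norm_sub_rev]
  exact key q p hp

lemma hasStrictTangentSpaceAt_of_subset_regularPoints {S : Set (En n)} (hSK : S ⊆ K)
    (hS : S ⊆ regularPoints n K) (x : S) :
    HasStrictTangentSpaceAt S (ℝ ∙ nuMap n K x)ᗮ x := by
  have hcont : ContinuousAt (fun y : S => nuMap n K y) x :=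
    (continuousOn_nuMap.mono hS).domRestrict.continuousAt
  exact hasStrictTangentSpaceAt_orthogonal_span_singleton (nuMap_mem_normalsAt (hS x.2)).1 <|
    isLittleO_inner_sub_of_continuousAt hcont fun p q =>
      (nuMap_mem_normalsAt (hS q.2)).2 p (hSK p.2)

end OuterNormal

section PseudoCone

variable {n : ℕ} {C K ω : Set (En n)} {x u : En n}

lemma IsCPseudoCone.subset (hK : IsCPseudoCone n C K) : K ⊆ C := by
  obtain ⟨⟨-, hclosed, hconvex, -, hsmul⟩, rfl⟩ := hK
  intro x hx y hy t ht
  rcases ht.eq_or_lt with rfl | ht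
  · rwa [zero_smul, add_zero]
  have hlim : Tendsto (fun ε : ℝ => (1 - ε) • y + t • x) (𝓝[>] 0) (𝓝 (y + t • x)) := by
    have : Tendsto (fun ε : ℝ => (1 - ε) • y + t • x) (𝓝 0) (𝓝 ((1 - 0 : ℝ) • y + t • x)) :=
      Continuous.tendsto (by fun_prop) 0
    rw [sub_zero, one_smul] at this
    exact this.mono_left nhdsWithin_le_nhds
  refine hclosed.mem_of_tendsto hlim ?_
  filter_upwards [Ioo_mem_nhdsGT (lt_min zero_lt_one ht)] with ε ⟨hε0, hε⟩
  have hscaled : (t / ε) • x ∈ K :=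
    hsmul (t / ε) ((one_le_div hε0).2 (hε.le.trans (min_le_right _ _))) (smul_mem_smul_set hx)
  have hcomb := hconvex hy hscaled (sub_nonneg.2 (hε.le.trans (min_le_left _ _))) hε0.le
    (sub_add_cancel 1 ε)
  rwa [smul_smul, mul_div_cancel₀ _ hε0.ne'] at hcomb

lemma inner_neg_of_mem_interior_dualCone (hu : u ∈ interior (dualCone n C)) (hx : x ∈ C)
    (hx0 : x ≠ 0) : ⟪x, u⟫ < 0 := by
  have hlim : Tendsto (fun ε : ℝ => u + ε • x) (𝓝[>] 0) (𝓝 u) := by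
    have : Tendsto (fun ε : ℝ => u + ε • x) (𝓝 0) (𝓝 (u + (0 : ℝ) • x)) :=
      Continuous.tendsto (by fun_prop) 0
    rw [zero_smul, add_zero] at this
    exact this.mono_left nhdsWithin_le_nhds
  obtain ⟨ε, hdual, hε⟩ :=
    ((hlim.eventually (mem_interior_iff_mem_nhds.1 hu)).and self_mem_nhdsWithin).exists
  have hle : ⟪u + ε • x, x⟫ ≤ 0 := hdual x hx
  rw [inner_add_left, real_inner_smul_left, real_inner_comm] at hle
  have hpos : 0 < ε * ⟪x, x⟫ := mul_pos hε (real_inner_self_pos.2 hx0)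
  linarith

lemma normalsAt_nonempty (hC : Convex ℝ C) (hint : (interior C).Nonempty)
    (hx : x ∉ interior C) : (normalsAt n C x).Nonempty := by
  obtain ⟨f, hf0, hf⟩ := geometric_hahn_banach_of_nonempty_interior_point hC hx hint
  obtain ⟨w, rfl⟩ := (InnerProductSpace.toDual ℝ (En n)).surjective f
  have hw : w ≠ 0 := by rintro rfl; exact hf0 (map_zero _)
  refine ⟨NormedSpace.normalize w, NormedSpace.norm_normalize hw, fun y hy => ?_⟩
  rw [NormedSpace.normalize, real_inner_smul_right, real_inner_smul_right, real_inner_comm,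
    real_inner_comm w]
  exact mul_le_mul_of_nonneg_left (hf y hy) (inv_nonneg.2 (norm_nonneg w))

lemma inner_eq_zero_of_mem_normalsAt (hC : ∀ x ∈ C, ∀ r : ℝ, 0 ≤ r → r • x ∈ C) (hx : x ∈ C)
    (hu : u ∈ normalsAt n C x) : ⟪x, u⟫ = 0 := by
  have hzero := hu.2 _ (hC x hx 0 le_rfl)
  have htwo := hu.2 _ (hC x hx 2 zero_le_two)
  rw [zero_smul, inner_zero_left] at hzero
  rw [real_inner_smul_left] at htwo
  linarith

lemma mem_interior_of_normalsAt_eq_singleton (hC : IsGoodCone n C) (hKC : K ⊆ C) (hx : x ∈ C)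
    (hu : normalsAt n K x = {u}) (hxu : ⟪x, u⟫ ≠ 0) : x ∈ interior C := by
  by_contra hxint
  obtain ⟨w, hw⟩ := normalsAt_nonempty hC.2.1 hC.2.2.2.2 hxint
  obtain rfl : w = u := by
    have := normalsAt_subset_of_subset hKC hw
    rwa [hu] at this
  exact hxu (inner_eq_zero_of_mem_normalsAt hC.2.2.1 hx hw)

lemma smul_mem_interior_of_pos (hC : ∀ x ∈ C, ∀ r : ℝ, 0 ≤ r → r • x ∈ C)
    (hx : x ∈ interior C) {r : ℝ} (hr : 0 < r) : r • x ∈ interior C := by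
  have hsub : r • C ⊆ C := by
    rintro _ ⟨y, hy, rfl⟩
    exact hC y hy r hr.le
  have := interior_mono hsub
  rw [interior_smul₀ hr.ne'] at this
  exact this (smul_mem_smul_set hx)

lemma rho_normalize_of_mem_normalsAt (hx : x ∈ K) (hu : u ∈ normalsAt n K x) (hxu : ⟪x, u⟫ < 0) :
    rho n K (NormedSpace.normalize x) = ‖x‖ := by
  have hx0 : 0 < ‖x‖ := norm_pos_iff.2 (by rintro rfl; exact hxu.ne (inner_zero_left u))
  refine IsLeast.csInf_eq ⟨?_, fun t ht => ?_⟩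
  · rwa [mem_ofPred_eq, NormedSpace.norm_smul_normalize]
  · have hsupp : t * ‖x‖⁻¹ * ⟪x, u⟫ ≤ 1 * ⟪x, u⟫ := by
      have := hu.2 _ ht
      rwa [NormedSpace.normalize, smul_smul, real_inner_smul_left, ← one_mul ⟪x, u⟫,
        ← mul_assoc, mul_one] at this
    have hone : 1 ≤ t * ‖x‖⁻¹ := (mul_le_mul_right_of_neg hxu).1 hsupp
    rwa [← div_eq_mul_inv, one_le_div hx0] at hone

lemma radMap_normalize_of_mem_normalsAt (hx : x ∈ K) (hu : u ∈ normalsAt n K x) (hxu : ⟪x, u⟫ < 0) :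
    radMap n K (NormedSpace.normalize x) = x := by
  rw [radMap, rho_normalize_of_mem_normalsAt hx hu hxu, NormedSpace.norm_smul_normalize]

lemma IsCPseudoCone.mem_of_mem_nuInv (hK : IsCPseudoCone n C K) (hx : x ∈ nuInv n K ω) : x ∈ K :=
  hK.1.2.1.frontier_subset hx.1

lemma IsCPseudoCone.mem_diff_zero (hK : IsCPseudoCone n C K) (hx : x ∈ K) : x ∈ C \ {0} :=
  ⟨hK.subset hx, by rintro rfl; exact hK.1.2.2.2.1 hx⟩

lemma IsCPseudoCone.inner_nuMap_neg (hK : IsCPseudoCone n C K) (hω : ω ⊆ omegaDual n C)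
    (hx : x ∈ nuInv n K ω) : ⟪x, nuMap n K x⟫ < 0 :=
  have hxC := hK.mem_diff_zero (hK.mem_of_mem_nuInv hx)
  inner_neg_of_mem_interior_dualCone (hω (mem_nuInv_iff.1 hx).2.2).2 hxC.1 hxC.2

lemma IsCPseudoCone.rho_normalize (hK : IsCPseudoCone n C K) (hω : ω ⊆ omegaDual n C)
    (hx : x ∈ nuInv n K ω) : rho n K (NormedSpace.normalize x) = ‖x‖ :=
  rho_normalize_of_mem_normalsAt (hK.mem_of_mem_nuInv hx)
    (nuMap_mem_normalsAt (mem_nuInv_iff.1 hx).2.1) (hK.inner_nuMap_neg hω hx)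

lemma IsCPseudoCone.leftInvOn_radMap_normalize (hK : IsCPseudoCone n C K)
    (hω : ω ⊆ omegaDual n C) :
    LeftInvOn (radMap n K) NormedSpace.normalize (nuInv n K ω) := fun _ hx =>
  radMap_normalize_of_mem_normalsAt (hK.mem_of_mem_nuInv hx)
    (nuMap_mem_normalsAt (mem_nuInv_iff.1 hx).2.1) (hK.inner_nuMap_neg hω hx)

lemma IsCPseudoCone.normalize_radMap (hK : IsCPseudoCone n C K) (hω : ω ⊆ omegaDual n C)
    {v : En n} (hv : v ∈ omegaC n C) (hx : radMap n K v ∈ nuInv n K ω) :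
    NormedSpace.normalize (radMap n K v) = v := by
  have hv1 : ‖v‖ = 1 := mem_sphere_zero_iff_norm.1 hv.1
  have hv0 : v ≠ 0 := norm_ne_zero_iff.1 (hv1 ▸ one_ne_zero)
  have hneg := inner_neg_of_mem_interior_dualCone (hω (mem_nuInv_iff.1 hx).2.2).2
    (interior_subset hv.2) hv0
  have hrho : 0 < rho n K v := by
    have := hK.inner_nuMap_neg hω hx
    nth_rewrite 1 [radMap] at this
    rw [real_inner_smul_left] at this
    exact pos_of_mul_neg_left this hneg.le
  rw [radMap, NormedSpace.normalize_smul_of_pos hrho,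
    NormedSpace.normalize_eq_self_of_norm_eq_one hv1]

lemma alphaInv_eq_image_normalize (hC : IsGoodCone n C) (hK : IsCPseudoCone n C K)
    (hω : ω ⊆ omegaDual n C) : alphaInv n C K ω = NormedSpace.normalize '' nuInv n K ω := by
  refine Subset.antisymm ?_ ?_
  · rintro v ⟨hv, hfrontier, -, hnormal⟩
    exact ⟨_, ⟨hfrontier, hnormal⟩, hK.normalize_radMap hω hv ⟨hfrontier, hnormal⟩⟩
  · rintro _ ⟨x, hx, rfl⟩
    have hxC := hK.mem_diff_zero (hK.mem_of_mem_nuInv hx)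
    have hxint : x ∈ interior C := mem_interior_of_normalsAt_eq_singleton hC hK.subset hxC.1
      (normalsAt_eq_singleton_nuMap (mem_nuInv_iff.1 hx).2.1) (hK.inner_nuMap_neg hω hx).ne
    refine ⟨⟨mem_sphere_zero_iff_norm.2 (NormedSpace.norm_normalize hxC.2),
      smul_mem_interior_of_pos hC.2.2.1 hxint (inv_pos.2 (norm_pos_iff.2 hxC.2))⟩, ?_⟩
    rw [hK.leftInvOn_radMap_normalize hω hx]
    exact ⟨hx.1, hxint, hx.2⟩

end PseudoCone

section SurfaceArea

variable {n : ℕ} {C K ω : Set (En n)} {Θ : En n → ℝ} {μ : Measure (En n)} {F : Type*}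
  [NormedAddCommGroup F] [NormedSpace ℝ F]

lemma RepsSurf.restrict_eq_map_withDensity (hμ : RepsSurf n C Θ K μ) (hω : MeasurableSet ω)
    (hωsub : ω ⊆ omegaDual n C) :
    μ.restrict ω = ((μH[(n : ℝ) - 1].restrict (nuInv n K ω)).withDensity
      fun x => ENNReal.ofReal (Θ x)).map (nuMap n K) := by
  ext s hs
  have hinter : nuMap n K ⁻¹' s ∩ nuInv n K ω = nuInv n K (s ∩ ω) := by
    ext x
    simp only [mem_inter_iff, mem_preimage, mem_nuInv_iff]
    tauto
  rw [Measure.restrict_apply hs, hμ.2 _ (hs.inter hω) (inter_subset_right.trans hωsub),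
    Measure.map_apply measurable_nuMap hs, withDensity_apply _ (measurable_nuMap hs),
    Measure.restrict_restrict (measurable_nuMap hs), hinter, surfTheta]

lemma RepsSurf.setIntegral_eq (hμ : RepsSurf n C Θ K μ) (hω : MeasurableSet ω)
    (hωsub : ω ⊆ omegaDual n C)
    (hΘm : AEMeasurable Θ (μH[(n : ℝ) - 1].restrict (nuInv n K ω)))
    (hΘ : ∀ x ∈ nuInv n K ω, 0 ≤ Θ x) {g : En n → F}
    (hg : AEStronglyMeasurable g (μ.restrict ω)) :
    ∫ u in ω, g u ∂μ = ∫ x in nuInv n K ω, Θ x • g (nuMap n K x) ∂μH[(n : ℝ) - 1] := by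
  rw [hμ.restrict_eq_map_withDensity hω hωsub] at hg ⊢
  rw [integral_map measurable_nuMap.aemeasurable hg,
    integral_withDensity_eq_integral_toReal_smul₀ hΘm.ennreal_ofReal
      (ae_of_all _ fun _ => ENNReal.ofReal_lt_top)]
  exact setIntegral_congr_fun (measurableSet_nuInv hω) fun x hx => by
    rw [ENNReal.toReal_ofReal (hΘ x hx)]

lemma setIntegral_alphaInv (hC : IsGoodCone n C) (hK : IsCPseudoCone n C K)
    (hω : MeasurableSet ω) (hωsub : ω ⊆ omegaDual n C) (G : En n → F) :
    ∫ v in alphaInv n C K ω, G v ∂μH[(n : ℝ) - 1] =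
      ∫ x in nuInv n K ω, radialJacobian (nuMap n K x) x • G (NormedSpace.normalize x)
        ∂μH[(n : ℝ) - 1] := by
  have hreg : nuInv n K ω ⊆ regularPoints n K := fun x hx => (mem_nuInv_iff.1 hx).2.1
  have := setIntegral_image_normalize (measurableSet_nuInv hω)
    (hK.leftInvOn_radMap_normalize hωsub).injOn (continuousOn_nuMap.mono hreg)
    (fun x hx => (nuMap_mem_normalsAt (hreg hx)).1) (fun x hx => (hK.inner_nuMap_neg hωsub hx).ne)
    (hasStrictTangentSpaceAt_of_subset_regularPoints (fun x hx => hK.mem_of_mem_nuInv hx) hreg) G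
  rwa [finrank_euclideanSpace_fin, ← alphaInv_eq_image_normalize hC hK hωsub] at this

theorem statement10_general (hC : IsGoodCone n C) (hΘm : Measurable fun x : ↥(C \ {0}) => Θ x)
    (hΘ : ∀ x ∈ C \ {0}, 0 ≤ Θ x) (hK : IsCPseudoCone n C K) (hω : MeasurableSet ω)
    (hωsub : ω ⊆ omegaDual n C) (hμ : RepsSurf n C Θ K μ) {g : En n → F}
    (hg : AEStronglyMeasurable g (μ.restrict ω)) :
    ∫ u in ω, g u ∂μ =
      ∫ v in alphaInv n C K ω,
        (Θ (radMap n K v) * (rho n K v ^ (n - 1) / |⟪v, nuMap n K (radMap n K v)⟫|)) •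
          g (nuMap n K (radMap n K v)) ∂μH[(n : ℝ) - 1] := by
  have hSC (x : En n) (hx : x ∈ nuInv n K ω) : x ∈ C \ {0} :=
    hK.mem_diff_zero (hK.mem_of_mem_nuInv hx)
  have hS : MeasurableSet (nuInv n K ω) := measurableSet_nuInv hω
  have hΘS : AEMeasurable Θ (μH[(n : ℝ) - 1].restrict (nuInv n K ω)) :=
    (aemeasurable_restrict_iff_comap_subtype hS).2
      (hΘm.comp (measurable_inclusion hSC)).aemeasurable
  rw [hμ.setIntegral_eq hω hωsub hΘS (fun x hx => hΘ x (hSC x hx)) hg,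
    setIntegral_alphaInv hC hK hω hωsub]
  refine setIntegral_congr_fun hS fun x hx => ?_
  have hJ : (radialJacobian (nuMap n K x) x : ℝ) ≠ 0 :=
    NNReal.coe_ne_zero.2 (radialJacobian_ne_zero (hK.inner_nuMap_neg hωsub hx).ne)
  have hJinv := coe_radialJacobian_inv (nuMap n K x) x
  rw [finrank_euclideanSpace_fin] at hJinv
  simp only [hK.leftInvOn_radMap_normalize hωsub hx, hK.rho_normalize hωsub hx, ← hJinv,
    NNReal.smul_def, smul_smul]
  rw [mul_left_comm, mul_inv_cancel₀ hJ, mul_one]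

end SurfaceArea

/-- For `K ∈ ps(C)`, a nonempty Borel set `ω ⊆ Ω_{C°}` and bounded
measurable `g : ω → ℝ`,
`∫_ω g dS_{n-1}^Θ(K,·) = ∫_{α_K^{-1}(ω)} g(α_K v) Θ(r_K v) ρ_K(v)^{n-1}/|⟨v,α_K v⟩| dv`,
where `dv` is spherical Lebesgue measure (the `(n-1)`-dimensional Hausdorff measure on the
unit sphere). -/
theorem statement10 (n : ℕ) (hn : 2 ≤ n) (C : Set (En n)) (hC : IsGoodCone n C)
    (q : ℝ) (hq1 : (n : ℝ) - 1 < q) (hq2 : q < n)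
    (Θ : En n → ℝ) (hΘ : IsThetaWeight n C q Θ)
    (K : Set (En n)) (hK : IsCPseudoCone n C K)
    (ω : Set (En n)) (hωne : ω.Nonempty) (hω : MeasurableSet ω) (hωsub : ω ⊆ omegaDual n C)
    (g : En n → ℝ) (hgm : Measurable g) (hgb : ∃ M : ℝ, ∀ u ∈ ω, |g u| ≤ M)
    (μ : Measure (En n)) (hμ : RepsSurf n C Θ K μ) :
    ∫ u in ω, g u ∂μ =
      ∫ v in alphaInv n C K ω,
        g (nuMap n K (radMap n K v)) * Θ (radMap n K v) * rho n K v ^ (n - 1) /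
          |⟪v, nuMap n K (radMap n K v)⟫| ∂(μH[(n : ℝ) - 1]) := by
  have h := statement10_general hC (continuousOn_iff_continuous_domRestrict.1 hΘ.1).measurable
    (fun x hx => (hΘ.2.1 x hx).le) hK hω hωsub hμ hgm.aestronglyMeasurable
  simpa only [smul_eq_mul, mul_assoc, mul_comm, mul_div_assoc, mul_left_comm] using h
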